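/- For all real numbers α, β, γ, δ, with σ = (α+β+γ+δ)/2 and ᾱ = σ−α, β̄ = σ−β, γ̄ = σ−γ, δ̄ = σ−δ, the coefficients c₂₂ = sin δ̄ · sin(σ−β−δ), c₂₀ = sin ᾱ · sin(σ−β−α), c₀₂ = sin γ̄ · sin(σ−β−γ), c₀₀ = sin β̄ · sin σ satisfy the identity c₂₂·c₀₀ − c₂₀·c₀₂ = sin α · sin γ · (sin β̄ · sin δ̄ − sin ᾱ · sin γ̄). -/

import Mathlib

open Real

/-!
The three-term identity `sin (x + y) sin (y + z) = sin x sin z + sin y sin (x + y + z)` expands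
`sin α sin γ` in two ways: as `sin αb sin γb + sin σ sin (σ - β - δ)` and as
`sin βb sin δb + sin (σ - β - α) sin (σ - β - γ)`. Multiply the first by `sin βb sin δb`, the second
by `sin αb sin γb`, and subtract: the common term `sin αb sin βb sin γb sin δb` cancels.
-/

theorem sin_add_mul_sin_add (x y z : ℂ) :
    Complex.sin (x + y) * Complex.sin (y + z) =
      Complex.sin x * Complex.sin z + Complex.sin y * Complex.sin (x + y + z) := by
  simp only [Complex.sin_add, Complex.cos_add]
  linear_combination Complex.sin x * Complex.sin z * Complex.sin_sq_add_cos_sq y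

theorem determinant_identity_general (α β γ δ σ αb βb γb δb : ℂ)
    (hσ : σ = (α + β + γ + δ) / 2)
    (hα : αb = σ - α) (hβ : βb = σ - β) (hγ : γb = σ - γ) (hδ : δb = σ - δ) :
    (Complex.sin δb * Complex.sin (σ - β - δ)) * (Complex.sin βb * Complex.sin σ) -
        (Complex.sin αb * Complex.sin (σ - β - α)) * (Complex.sin γb * Complex.sin (σ - β - γ)) =
      Complex.sin α * Complex.sin γ *
        (Complex.sin βb * Complex.sin δb - Complex.sin αb * Complex.sin γb) := by
  have sin_α_mul_sin_γ : Complex.sin α * Complex.sin γ =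
      Complex.sin γb * Complex.sin αb + Complex.sin (σ - β - δ) * Complex.sin σ := by
    convert sin_add_mul_sin_add γb (σ - β - δ) αb using 3 <;> grind
  have sin_α_mul_sin_γ' : Complex.sin α * Complex.sin γ =
      Complex.sin (σ - β - α) * Complex.sin (σ - β - γ) + Complex.sin βb * Complex.sin δb := by
    have h := sin_add_mul_sin_add (-(σ - β - α)) βb (-(σ - β - γ))
    rw [Complex.sin_neg, Complex.sin_neg, neg_mul_neg] at h
    convert h using 3 <;> grind
  linear_combination Complex.sin αb * Complex.sin γb * sin_α_mul_sin_γ' -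
    Complex.sin βb * Complex.sin δb * sin_α_mul_sin_γ

theorem determinant_identity (α β γ δ σ αb βb γb δb : ℝ)
    (hσ : σ = (α + β + γ + δ) / 2)
    (hα : αb = σ - α) (hβ : βb = σ - β) (hγ : γb = σ - γ) (hδ : δb = σ - δ) :
    (sin δb * sin (σ - β - δ)) * (sin βb * sin σ) -
        (sin αb * sin (σ - β - α)) * (sin γb * sin (σ - β - γ)) =
      sin α * sin γ * (sin βb * sin δb - sin αb * sin γb) := by
  exact_mod_cast determinant_identity_general α β γ δ σ αb βb γb δb
    (mod_cast hσ) (mod_cast hα) (mod_cast hβ) (mod_cast hγ) (mod_cast hδ)
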